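/- Let (p_k)_{k≥0} be nonnegative reals with ∑_{k≥0} p_k = 1, let φ(s) = ∑_{k≥0} p_k s^k for s ∈ [0,1], and let P ∈ [0,1). For each m ≥ 0 define p^{(1)}_m = (1/(1−P)) ∑_{k≥1} p_{m+k} · C(m+k, k) · P^k (1−P)^m, where C(m+k,k) is the binomial coefficient. Then for every s ∈ [0,1], ∑_{m≥0} p^{(1)}_m s^m = (1/(1−P)) [φ(P + s(1−P)) − φ(s(1−P))]. In particular, if φ(1−P) = P, then ∑_{m≥0} p^{(1)}_m = 1, so (p^{(1)}_m)_{m≥0} is again a probability distribution on ℕ. -/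

import Mathlib

/-!
Grouping the double series `∑ₘ ∑ₖ p_{m+k} C(m+k,k) Pᵏ (s(1−P))ᵐ` by `n = m + k` gives
`φ(P + s(1−P))` by the binomial theorem, while its `k = 0` column sums to `φ(s(1−P))`; what is left
is `1 − P` times the generating function of `p⁽¹⁾`. As `P + |s|(1−P) ≤ 1`, the double series is
dominated by `∑ₙ |pₙ|`, so it may be summed in either order even on the boundary of the disc.
-/

open Finset

section Antidiagonal

variable {A : Type*} [AddCommMonoid A] [HasAntidiagonal A]

theorem hasSum_sum_antidiagonal {M : Type*} [AddCommMonoid M] [TopologicalSpace M]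
    [ContinuousAdd M] [RegularSpace M] {f : A × A → M} {s : M} (hf : HasSum f s) :
    HasSum (fun n ↦ ∑ q ∈ antidiagonal n, f q) s :=
  (HasAntidiagonal.sigmaAntidiagonalEquivProd.hasSum_iff.mpr hf).sigma
    fun n ↦ (antidiagonal n).hasSum f

theorem summable_iff_summable_sum_antidiagonal_of_nonneg {f : A × A → ℝ} (hf : ∀ q, 0 ≤ f q) :
    Summable f ↔ Summable fun n ↦ ∑ q ∈ antidiagonal n, f q := by
  rw [← HasAntidiagonal.sigmaAntidiagonalEquivProd.summable_iff, Function.comp_def,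
    summable_sigma_of_nonneg fun _ ↦ hf _, and_iff_right fun _ ↦ Summable.of_finite]
  exact summable_congr fun n ↦ Finset.tsum_subtype (antidiagonal n) f

end Antidiagonal

/-- The `(m, k)` entry of the double series obtained by expanding every power in
`∑ₙ aₙ (x + y)ⁿ` by the binomial theorem; `k` is the exponent of `x` and `m` that of `y`. -/
def binomialTerm {R : Type*} [Semiring R] (a : ℕ → R) (x y : R) (m k : ℕ) : R :=
  a (m + k) * (m + k).choose k * x ^ k * y ^ m

theorem binomialTerm_zero_right {R : Type*} [Semiring R] (a : ℕ → R) (x y : R) (m : ℕ) :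
    binomialTerm a x y m 0 = a m * y ^ m := by
  simp [binomialTerm]

theorem sum_antidiagonal_binomialTerm {R : Type*} [CommSemiring R] (a : ℕ → R) (x y : R) (n : ℕ) :
    ∑ q ∈ antidiagonal n, binomialTerm a x y q.1 q.2 = a n * (x + y) ^ n := by
  rw [add_comm x y, (Commute.all y x).add_pow', mul_sum]
  refine sum_congr rfl fun q hq ↦ ?_
  obtain rfl := mem_antidiagonal.mp hq
  rw [binomialTerm, ← Nat.choose_symm_add, nsmul_eq_mul]
  ring

section Normed

variable {R : Type*} [NormedCommRing R] [NormOneClass R] {a : ℕ → R} {x y : R}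

theorem norm_binomialTerm_le (a : ℕ → R) (x y : R) (m k : ℕ) :
    ‖binomialTerm a x y m k‖ ≤ binomialTerm (fun n ↦ ‖a n‖) ‖x‖ ‖y‖ m k := by
  have norm_choose_le : ‖((m + k).choose k : R)‖ ≤ (m + k).choose k := by
    simpa only [norm_one, mul_one] using Nat.norm_cast_le (α := R) ((m + k).choose k)
  unfold binomialTerm
  grw [norm_mul_le, norm_mul_le, norm_mul_le, norm_choose_le, norm_pow_le, norm_pow_le]

variable [CompleteSpace R]

theorem summable_binomialTerm (h : Summable fun n ↦ ‖a n‖ * (‖x‖ + ‖y‖) ^ n) :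
    Summable fun q : ℕ × ℕ ↦ binomialTerm a x y q.1 q.2 := by
  refine Summable.of_norm_bounded ?_ fun q ↦ norm_binomialTerm_le a x y q.1 q.2
  rw [summable_iff_summable_sum_antidiagonal_of_nonneg
    fun q ↦ (norm_nonneg _).trans (norm_binomialTerm_le a x y q.1 q.2)]
  simpa only [sum_antidiagonal_binomialTerm] using h

theorem hasSum_binomialTerm (h : Summable fun n ↦ ‖a n‖ * (‖x‖ + ‖y‖) ^ n) :
    HasSum (fun q : ℕ × ℕ ↦ binomialTerm a x y q.1 q.2) (∑' n, a n * (x + y) ^ n) := by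
  have hs := summable_binomialTerm h
  have hdiag := hasSum_sum_antidiagonal hs.hasSum
  simp only [sum_antidiagonal_binomialTerm] at hdiag
  exact hdiag.tsum_eq ▸ hs.hasSum

theorem hasSum_tsum_binomialTerm_succ (h : Summable fun n ↦ ‖a n‖ * (‖x‖ + ‖y‖) ^ n) :
    HasSum (fun m ↦ ∑' k, binomialTerm a x y m (k + 1))
      (∑' n, a n * (x + y) ^ n - ∑' n, a n * y ^ n) := by
  have hs := summable_binomialTerm h
  have hrows : HasSum (fun m ↦ ∑' k, binomialTerm a x y m k) (∑' n, a n * (x + y) ^ n) :=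
    (hasSum_binomialTerm h).prod_fiberwise fun m ↦ (hs.prod_factor m).hasSum
  have hcol : HasSum (fun m ↦ binomialTerm a x y m 0) (∑' n, a n * y ^ n) := by
    have hcol_summable := hs.comp_injective (Prod.mk_left_injective 0)
    simpa only [Function.comp_def, binomialTerm_zero_right] using hcol_summable.hasSum
  refine (hrows.sub hcol).congr_fun fun m ↦ ?_
  rw [(hs.prod_factor m).tsum_eq_zero_add, add_sub_cancel_left]

end Normed

theorem summable_norm_mul_pow {R : Type*} [SeminormedAddCommGroup R] {a : ℕ → R}
    (ha : Summable fun n ↦ ‖a n‖) {r : ℝ} (hr0 : 0 ≤ r) (hr1 : r ≤ 1) :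
    Summable fun n ↦ ‖a n‖ * r ^ n :=
  ha.of_nonneg_of_le (fun _ ↦ by positivity)
    fun _ ↦ mul_le_of_le_one_right (norm_nonneg _) (pow_le_one₀ hr0 hr1)

theorem hasSum_of_tsum_eq_of_ne_zero {ι M : Type*} [AddCommMonoid M] [TopologicalSpace M]
    {f : ι → M} {s : M} (hf : ∑' i, f i = s) (hs : s ≠ 0) : HasSum f s := by
  have hsummable : Summable f := by
    contrapose! hs
    rw [← hf, tsum_eq_zero_of_not_summable hs]
  exact hf ▸ hsummable.hasSum

theorem stmt16_general {𝕜 : Type*} [RCLike 𝕜] (p : ℕ → 𝕜) (hsum : HasSum p 1)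
    (P : ℝ) (hP0 : 0 ≤ P) (hP1 : P < 1)
    (φ : 𝕜 → 𝕜) (hφ : ∀ s : 𝕜, φ s = ∑' k : ℕ, p k * s ^ k)
    (p1 : ℕ → 𝕜)
    (hp1 : ∀ m : ℕ, p1 m = (1 / (1 - P)) *
      ∑' k : ℕ, p (m + (k + 1)) * ((m + (k + 1)).choose (k + 1) : 𝕜) *
        P ^ (k + 1) * (1 - P) ^ m) :
    (∀ s : 𝕜, ‖s‖ ≤ 1 →
      HasSum (fun m ↦ p1 m * s ^ m) ((1 / (1 - P)) * (φ (P + s * (1 - P)) - φ (s * (1 - P))))) ∧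
    (φ (1 - P) = P → HasSum p1 1) := by
  have hpgf : ∀ s : 𝕜, ‖s‖ ≤ 1 → HasSum (fun m ↦ p1 m * s ^ m)
      ((1 / (1 - P)) * (φ (P + s * (1 - P)) - φ (s * (1 - P)))) := by
    intro s hs
    have hnormP : ‖(P : 𝕜)‖ = P := RCLike.norm_of_nonneg hP0
    have hnormQ : ‖(1 - P : 𝕜)‖ = 1 - P := by
      simpa using RCLike.norm_of_nonneg (K := 𝕜) (sub_nonneg.mpr hP1.le)
    have hle : ‖(P : 𝕜)‖ + ‖s * (1 - P)‖ ≤ 1 := by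
      rw [norm_mul, hnormP, hnormQ]
      linarith [mul_le_of_le_one_left (sub_nonneg.mpr hP1.le) hs]
    have hterm (m : ℕ) : p1 m * s ^ m =
        (1 / (1 - P)) * ∑' k, binomialTerm p (P : 𝕜) (s * (1 - P)) m (k + 1) := by
      simp only [hp1, binomialTerm, mul_assoc, ← tsum_mul_right, mul_pow, mul_comm (s ^ m)]
    simp only [hterm, hφ]
    exact (hasSum_tsum_binomialTerm_succ
      (summable_norm_mul_pow hsum.summable.norm (by positivity) hle)).mul_left _
  refine ⟨hpgf, fun hfix ↦ ?_⟩
  have hne : (1 - P : 𝕜) ≠ 0 := sub_ne_zero.mpr (by exact_mod_cast hP1.ne')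
  have hφ_one : φ 1 = 1 := by simpa [hφ] using hsum.tsum_eq
  simpa [hfix, hφ_one, hne] using hpgf 1 norm_one.le

/-- with `φ(s) = ∑ₖ pₖ sᵏ` and `P ∈ [0,1)`, define
`p⁽¹⁾ₘ = (1/(1−P)) ∑_{k≥1} p_{m+k} C(m+k,k) Pᵏ (1−P)ᵐ`. Then for all
`s ∈ [0,1]`, `∑ₘ p⁽¹⁾ₘ sᵐ = (1/(1−P))[φ(P + s(1−P)) − φ(s(1−P))]`; in
particular, if `φ(1−P) = P`, then `∑ₘ p⁽¹⁾ₘ = 1`, so `(p⁽¹⁾ₘ)` is again a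
probability distribution on `ℕ`. -/
theorem stmt16 (p : ℕ → ℝ) (hp : ∀ k, 0 ≤ p k) (hsum : ∑' k, p k = 1)
    (P : ℝ) (hP0 : 0 ≤ P) (hP1 : P < 1)
    (φ : ℝ → ℝ) (hφ : ∀ s : ℝ, φ s = ∑' k : ℕ, p k * s ^ k)
    (p1 : ℕ → ℝ)
    (hp1 : ∀ m : ℕ, p1 m = (1 / (1 - P)) *
      ∑' k : ℕ, p (m + (k + 1)) * ((m + (k + 1)).choose (k + 1) : ℝ) *
        P ^ (k + 1) * (1 - P) ^ m) :
    (∀ s ∈ Set.Icc (0 : ℝ) 1,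
      ∑' m : ℕ, p1 m * s ^ m = (1 / (1 - P)) * (φ (P + s * (1 - P)) - φ (s * (1 - P)))) ∧
    (φ (1 - P) = P → ∑' m : ℕ, p1 m = 1) := by
  have h := stmt16_general p (hasSum_of_tsum_eq_of_ne_zero hsum one_ne_zero) P hP0 hP1 φ hφ p1 hp1
  exact ⟨fun s hs ↦ (h.1 s (abs_le.mpr ⟨by linarith [hs.1], hs.2⟩)).tsum_eq,
    fun hfix ↦ (h.2 hfix).tsum_eq⟩
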